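/- Every left-full computable instance of the cross-constraint problem has a solution (X⁰,Y⁰), (X¹,Y¹) with (X⁰,Y⁰) ⊕ (X¹,Y¹) ≤_T ∅′. -/

import Mathlib

namespace Paper

/-- Codes for oracle Turing machines. -/
inductive OCode : Type
  | zero | succ | left | right | oracle
  | pair (a b : OCode) | comp (a b : OCode) | prec (a b : OCode) | rfind' (a : OCode)

/-- Evaluation of an oracle code with oracle `O`. -/
def oeval (O : ℕ → ℕ) : OCode → ℕ →. ℕ
  | .zero => pure 0
  | .succ => Nat.succ
  | .left => ↑fun n : ℕ => n.unpair.1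
  | .right => ↑fun n : ℕ => n.unpair.2
  | .oracle => ↑fun n : ℕ => O n
  | .pair cf cg => fun n => Nat.pair <$> oeval O cf n <*> oeval O cg n
  | .comp cf cg => fun n => oeval O cg n >>= oeval O cf
  | .prec cf cg =>
    Nat.unpaired fun a n =>
      n.rec (oeval O cf a) fun y IH => do
        let i ← IH
        oeval O cg (Nat.pair a (Nat.pair y i))
  | .rfind' cf =>
    Nat.unpaired fun a m =>
      (Nat.rfind fun n => (fun m => m = 0) <$> oeval O cf (Nat.pair a (n + m))).map (· + m)

/-- A numbering of oracle codes. -/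
def encodeOCode : OCode → ℕ
  | .zero => 0
  | .succ => 1
  | .left => 2
  | .right => 3
  | .oracle => 4
  | .pair a b => 4 * Nat.pair (encodeOCode a) (encodeOCode b) + 5
  | .comp a b => 4 * Nat.pair (encodeOCode a) (encodeOCode b) + 6
  | .prec a b => 4 * Nat.pair (encodeOCode a) (encodeOCode b) + 7
  | .rfind' a => 4 * encodeOCode a + 8

/-- The Turing jump of an oracle. -/
def jump (O : ℕ → ℕ) : Set ℕ :=
  { n | ∃ c : OCode, encodeOCode c = n.unpair.1 ∧ (oeval O c n.unpair.2).Dom }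

/-- `f` is (total) recursive in the oracle `O`. -/
def RecIn (O : ℕ → ℕ) (f : ℕ → ℕ) : Prop :=
  ∃ c : OCode, ∀ n, oeval O c n = Part.some (f n)

/-- The all-zero (trivial, computable) oracle. -/
def zeroO : ℕ → ℕ := fun _ => 0

/-- Characteristic function of a set of naturals. -/
noncomputable def chi (A : Set ℕ) : ℕ → ℕ := A.indicator fun _ => 1

/-- Turing join of two oracles. -/
def joinF (f g : ℕ → ℕ) : ℕ → ℕ := fun n => if n % 2 = 0 then f (n / 2) else g (n / 2)

/-- `A` is Σ⁰₁ relative to the oracle `O` (c.e. in `O`). -/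
def SigmaIn (O : ℕ → ℕ) (A : Set ℕ) : Prop :=
  ∃ c : OCode, ∀ n, n ∈ A ↔ (oeval O c n).Dom

/-- The halting problem `∅′`. -/
noncomputable def emptyJump : Set ℕ := jump zeroO

end Paper
namespace Paper

abbrev Str3 := List (Fin 3)
abbrev StrTup (r : ℕ) := Fin r → List (Fin 2)

/-- A cross-tree `T ⊆ 3^{<ℕ} × (2^{<ℕ})^r`. -/
structure CrossTree (r : ℕ) where
  mem : Set (Str3 × StrTup r)
  len_eq : ∀ p ∈ mem, ∀ i j : Fin r, (p.2 i).length = (p.2 j).length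
  len_le : ∀ p ∈ mem, ∀ i : Fin r, (p.2 i).length ≤ p.1.length
  closed : ∀ p ∈ mem, ∀ q : Str3 × StrTup r, q.1 <+: p.1 → (∀ i, q.2 i <+: p.2 i) →
    (∀ i j : Fin r, (q.2 i).length = (q.2 j).length) →
    (∀ i : Fin r, (q.2 i).length ≤ q.1.length) → q ∈ mem

/-- Length-`n` initial segment of an infinite sequence. -/
def seg {α : Type} (X : ℕ → α) (n : ℕ) : List α := List.ofFn fun i : Fin n => X i

/-- `(X, Y)` is an infinite path of the cross-tree `T`. -/
def IsPath {r : ℕ} (T : CrossTree r) (X : ℕ → Fin 3) (Y : Fin r → ℕ → Fin 2) : Prop :=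
  ∀ n, (seg X n, fun i => seg (Y i) n) ∈ T.mem

/-- The infinite sequence `X` extends the finite string `ρ`. -/
def ExtendsL {α : Type} (X : ℕ → α) (ρ : List α) : Prop :=
  ∀ i : Fin ρ.length, X i = ρ.get i

/-- `T` is left-full below `(ρ, σ)`. -/
def LeftFullBelow {r : ℕ} (T : CrossTree r) (ρ : Str3) (σ : StrTup r) : Prop :=
  ∀ X : ℕ → Fin 3, ExtendsL X ρ →
    ∃ Y : Fin r → ℕ → Fin 2, (∀ i, ExtendsL (Y i) (σ i)) ∧ IsPath T X Y

/-- `T` is left-full (below the pair of empty stems). -/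
def LeftFull {r : ℕ} (T : CrossTree r) : Prop := LeftFullBelow T [] fun _ => []

/-- Encoding of nodes of a cross-tree as natural numbers. -/
def encNode {r : ℕ} (p : Str3 × StrTup r) : ℕ :=
  Nat.pair (Encodable.encode p.1) (Encodable.encode (List.ofFn p.2))

/-- The cross-tree `T` is computable. -/
def TreeComputable {r : ℕ} (T : CrossTree r) : Prop :=
  RecIn zeroO (chi {n | ∃ p ∈ T.mem, encNode p = n})

/-- A solution to the cross-constraint problem on instance `T`: a pair of paths whose
first components are finitely compatible and whose second components are pairwise
infinitely compatible. -/
def CCSolution {r : ℕ} (T : CrossTree r) (X : Fin 2 → ℕ → Fin 3)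
    (Y : Fin 2 → Fin r → ℕ → Fin 2) : Prop :=
  (∀ i : Fin 2, IsPath T (X i) (Y i)) ∧
  (∀ j : Fin 3, {n | X 0 n = j ∧ X 1 n = j}.Finite) ∧
  (∀ s : Fin r, ∃ j : Fin 2, {n | Y 0 s n = j ∧ Y 1 s n = j}.Infinite)

/-- Oracle encoding a path `(X, Y)` of a cross-tree. -/
def solOracle {r : ℕ} (X : ℕ → Fin 3) (Y : Fin r → ℕ → Fin 2) : ℕ → ℕ := fun n =>
  if n.unpair.1 = 0 then (X n.unpair.2 : ℕ)
  else if h : n.unpair.1 - 1 < r then (Y ⟨n.unpair.1 - 1, h⟩ n.unpair.2 : ℕ) else 0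

end Paper

/-!
Build both paths together from pairs of finite strings, extending the left strings only by positions
at which they differ, so that the left sequences agree finitely often. Left-fullness has a finitary
form, a `Π⁰₁` property of stems, and any two stems having it can be extended in this way.

The third color forces agreement on the right. Suppose two good extensions of the first stem give
different values to a right coordinate. Some left extension of the second stem avoids the left
strings of both at every position, and a good extension of the second stem along it cannot disagree
with both of them in that coordinate everywhere, because there are only two colors on the right.
So agreement can be forced unless the coordinate is already decided by the first stem. Start below a
stem deciding as many coordinates as possible: a coordinate decided later was decided from the
start, and then the two sides agree in it automatically.

A step that extends the pair and gives every coordinate a new agreement is thus always available,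
and being such a step is a `Π⁰₁` relation, so `∅′` computes the sequence of least steps.
-/

namespace Paper

section Combinatorics

variable {α β ι : Type*}

theorem exists_forall_of_dense [Finite ι] {P : Type*} {r : P → P → Prop} {V : P → Prop}
    {Q : ι → P → Prop} (mono : ∀ i p q, V p → r p q → Q i p → Q i q)
    (dense : ∀ i p, V p → ∃ q, V q ∧ r p q ∧ Q i q) {p : P} (hp : V p) :
    ∃ q, V q ∧ ∀ i, Q i q := by
  classical
  have := Fintype.ofFinite ι
  suffices ∀ s : Finset ι, ∃ q, V q ∧ ∀ i ∈ s, Q i q by simpa using this Finset.univ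
  intro s
  induction s using Finset.induction_on with
  | empty => exact ⟨p, hp, by simp⟩
  | insert i s _ ih =>
    obtain ⟨q, hq, hQ⟩ := ih
    obtain ⟨q', hq', hr, hi⟩ := dense i q hq
    exact ⟨q', hq', Finset.forall_mem_insert .. |>.2 ⟨hi, fun j hj => mono j q q' hq hr (hQ j hj)⟩⟩

/-- A condition: an initial segment of the left sequence together with an initial segment of the
right sequence. For a cross-tree with `r` right coordinates, `β` is `Fin r → Fin 2`, so that the
right component lists the columns of an `r`-tuple of strings. -/
abbrev Cond (α β : Type*) := List α × List β

/-- The extension order on conditions. -/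
def Cond.Extends (p q : Cond α β) : Prop := p.1 <+: q.1 ∧ p.2 <+: q.2

theorem Cond.Extends.refl (p : Cond α β) : p.Extends p := ⟨List.prefix_rfl, List.prefix_rfl⟩

theorem Cond.Extends.trans {p q q' : Cond α β} (h : p.Extends q) (h' : q.Extends q') :
    p.Extends q' :=
  ⟨h.1.trans h'.1, h.2.trans h'.2⟩

/-- A relation between strings (of equal length) is a tree if it is closed under simultaneous
truncation. -/
def IsTree (T : List α → List β → Prop) : Prop :=
  ∀ ⦃ρ τ⦄, T ρ τ → ∀ n, T (ρ.take n) (τ.take n)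

/-- The finitary form of left-fullness below `p`: every left string extending `p.1` has a partner
of the same length extending `p.2`. Such conditions are called good. -/
def FullBelow (T : List α → List β → Prop) (p : Cond α β) : Prop :=
  ∀ ρ, p.1 <+: ρ → ∃ τ, p.2 <+: τ ∧ τ.length = ρ.length ∧ T ρ τ

variable {T : List α → List β → Prop}

namespace FullBelow

variable {ρ ρ' : List α} {τ τ' : List β}

theorem mono_left (h : FullBelow T (ρ, τ)) (hρ : ρ <+: ρ') : FullBelow T (ρ', τ) :=
  fun σ hσ => h σ (hρ.trans hσ)

theorem length_le (h : FullBelow T (ρ, τ)) : τ.length ≤ ρ.length :=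
  have ⟨_, hυ, hlen, _⟩ := h ρ List.prefix_rfl
  hlen ▸ hυ.length_le

theorem mem_take (hT : IsTree T) (h : FullBelow T (ρ, τ)) {n : ℕ} (hn : n ≤ τ.length) :
    T (ρ.take n) (τ.take n) := by
  obtain ⟨υ, hυ : τ <+: υ, -, hmem⟩ := h ρ List.prefix_rfl
  rw [List.prefix_iff_eq_take.1 hυ, List.take_take, min_eq_left hn]
  exact hT hmem n

theorem exists_snoc [Finite β] [Nonempty α] (hT : IsTree T) (h : FullBelow T (ρ, τ)) :
    ∃ ρ' v, ρ <+: ρ' ∧ FullBelow T (ρ', τ ++ [v]) := by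
  by_contra! hcon
  let x := Classical.arbitrary α
  -- If no column `v` can be added, a single long `σ` rules out all of them at once.
  obtain ⟨σ, ⟨hσ, hlen⟩, hno⟩ := exists_forall_of_dense (ι := β) (r := (· <+: ·))
    (V := fun σ => ρ <+: σ ∧ τ.length < σ.length)
    (Q := fun v σ => ∀ υ, τ ++ [v] <+: υ → υ.length = σ.length → ¬ T σ υ)
    (fun v σ σ' hV hσ hQ υ hυ hυlen hmem => by
      have hle : σ.length ≤ υ.length := hυlen ▸ hσ.length_le
      refine hQ (υ.take σ.length) (List.prefix_take_iff.2 ⟨hυ, by simpa using hV.2⟩)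
        (by simpa using hle) ?_
      have := hT hmem σ.length
      rwa [← List.prefix_iff_eq_take.1 hσ] at this)
    (fun v σ hV => by
      have hnot := hcon σ v hV.1
      simp only [FullBelow, not_forall, not_exists, not_and] at hnot
      obtain ⟨σ', hσ', hnot⟩ := hnot
      exact ⟨σ', ⟨hV.1.trans hσ', hV.2.trans_le hσ'.length_le⟩, hσ', hnot⟩)
    (p := ρ ++ [x]) ⟨List.prefix_append .., by simpa [Nat.lt_succ_iff] using h.length_le⟩
  obtain ⟨υ, ⟨_ | ⟨v, w⟩, rfl⟩, hυlen, hmem⟩ := h σ hσ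
  · simp_all
  · exact hno v (τ ++ v :: w) ⟨w, by simp⟩ hυlen hmem

theorem exists_length_eq [Finite β] [Nonempty α] (hT : IsTree T) (h : FullBelow T (ρ, τ)) {n : ℕ}
    (hn : τ.length ≤ n) :
    ∃ ρ' τ', ρ <+: ρ' ∧ τ <+: τ' ∧ FullBelow T (ρ', τ') ∧ τ'.length = n := by
  induction n, hn using Nat.le_induction with
  | base => exact ⟨ρ, τ, List.prefix_rfl, List.prefix_rfl, h, rfl⟩
  | succ n _ ih =>
    obtain ⟨ρ₁, τ₁, hρ, hτ, h₁, rfl⟩ := ih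
    obtain ⟨ρ₂, v, hρ₂, h₂⟩ := h₁.exists_snoc hT
    exact ⟨ρ₂, τ₁ ++ [v], hρ.trans hρ₂, hτ.trans (List.prefix_append ..), h₂, by simp⟩

theorem exists_append_length_eq [Nonempty α] (h : FullBelow T (ρ ++ ρ', τ)) {n : ℕ}
    (hn : ρ'.length ≤ n) : ∃ σ, FullBelow T (ρ ++ σ, τ) ∧ σ.length = n := by
  let x := Classical.arbitrary α
  refine ⟨ρ' ++ List.replicate (n - ρ'.length) x, h.mono_left ?_, by simp [hn]⟩
  rw [← List.append_assoc]
  exact List.prefix_append ..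

end FullBelow

theorem exists_map_eval_eq {c : Fin 2 → List α} (h : (c 0).length = (c 1).length) :
    ∃ d : List (Fin 2 → α), ∀ i, d.map (· i) = c i :=
  ⟨((c 0).zip (c 1)).map fun x => ![x.1, x.2], Fin.forall_fin_two.2
    ⟨by simp [Function.comp_def, List.map_fst_zip h.le],
      by simp [Function.comp_def, List.map_snd_zip h.ge]⟩⟩

/-- A pair of conditions whose left components have equal lengths, and likewise the right
components; the pair is stored as a condition with letters `Fin 2 → α` and `Fin 2 → β`. -/
abbrev CondPair (α β : Type*) := Cond (Fin 2 → α) (Fin 2 → β)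

/-- The `i`-th member of a pair of conditions. -/
def CondPair.proj (i : Fin 2) (s : CondPair α β) : Cond α β := (s.1.map (· i), s.2.map (· i))

/-- `s'` extends `s`, and the two left members never agree at the positions added by `s'`. -/
def OffDiagExt (s s' : CondPair α β) : Prop :=
  s.Extends s' ∧ ∀ x ∈ s'.1.drop s.1.length, x 0 ≠ x 1

theorem Cond.Extends.proj {s s' : CondPair α β} (h : s.Extends s') (i : Fin 2) :
    (s.proj i).Extends (s'.proj i) := ⟨h.1.map _, h.2.map _⟩

namespace OffDiagExt

variable {s s' s'' : CondPair α β}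

theorem refl (s : CondPair α β) : OffDiagExt s s := ⟨.refl s, by simp⟩

theorem trans (h : OffDiagExt s s') (h' : OffDiagExt s' s'') : OffDiagExt s s'' := by
  refine ⟨h.1.trans h'.1, ?_⟩
  obtain ⟨⟨⟨d, hd⟩, -⟩, hne⟩ := h
  obtain ⟨⟨⟨e, he⟩, -⟩, hne'⟩ := h'
  rw [← hd, List.drop_left] at hne
  rw [← he, List.drop_left] at hne'
  rw [← he, ← hd, List.append_assoc, List.drop_left]
  exact fun x hx => (List.mem_append.1 hx).elim (hne x) (hne' x)

end OffDiagExt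

theorem exists_offDiagExt_of_fullBelow {s : CondPair α β} {c : Fin 2 → List α}
    {τ : Fin 2 → List β} (hfull : ∀ i, FullBelow T ((s.proj i).1 ++ c i, τ i))
    (hne : List.Forall₂ (· ≠ ·) (c 0) (c 1)) (hlen : (τ 0).length = (τ 1).length)
    (hτ : ∀ i, (s.proj i).2 <+: τ i) :
    ∃ s', OffDiagExt s s' ∧ (∀ i, FullBelow T (s'.proj i)) ∧ ∀ i, (s'.proj i).2 = τ i := by
  obtain ⟨d, hd⟩ := exists_map_eval_eq hne.length_eq
  choose υ hυ using hτ
  obtain ⟨e, he⟩ := exists_map_eval_eq (c := υ) (by simpa [← hυ, CondPair.proj] using hlen)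
  have hproj : ∀ i, CondPair.proj i (s.1 ++ d, s.2 ++ e) = ((s.proj i).1 ++ c i, τ i) := fun i => by
    simp [CondPair.proj, hd, he, ← hυ]
  refine ⟨(s.1 ++ d, s.2 ++ e), ⟨⟨List.prefix_append .., List.prefix_append ..⟩, ?_⟩,
    fun i => hproj i ▸ hfull i, fun i => by rw [hproj]⟩
  rw [← hd, ← hd] at hne
  simpa [List.forall₂_map_left_iff, List.forall₂_map_right_iff, List.forall₂_same] using hne

theorem forall₂_ne_map {f : α → α} (hf : ∀ x, f x ≠ x) (l : List α) :
    List.Forall₂ (· ≠ ·) (l.map f) l := by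
  simp [List.forall₂_map_left_iff, List.forall₂_same, hf]

theorem exists_offDiagExt_lt_length [Finite β] [Nontrivial α] (hT : IsTree T) {s : CondPair α β}
    (hs : ∀ i, FullBelow T (s.proj i)) :
    ∃ s', OffDiagExt s s' ∧ (∀ i, FullBelow T (s'.proj i)) ∧ s.2.length < s'.2.length := by
  choose f hf using fun x : α => exists_ne x
  obtain ⟨_, v₁, ⟨a, rfl⟩, h₁⟩ := (hs 1).exists_snoc hT
  obtain ⟨_, v₀, ⟨b, rfl⟩, h₀⟩ :=
    ((hs 0).mono_left (List.prefix_append _ (a.map f))).exists_snoc hT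
  replace h₁ := h₁.mono_left (List.prefix_append _ (b.map f))
  rw [List.append_assoc] at h₀ h₁
  obtain ⟨s', hs', hfull, hτ⟩ := exists_offDiagExt_of_fullBelow (s := s)
    (c := ![a.map f ++ b, a ++ b.map f]) (τ := fun i => (s.proj i).2 ++ [![v₀, v₁] i])
    (Fin.forall_fin_two.2 ⟨h₀, h₁⟩)
    (List.rel_append (forall₂_ne_map hf a) ((forall₂_ne_map hf b).flip.imp fun _ _ => Ne.symm))
    (by simp [CondPair.proj]) fun i => List.prefix_append ..
  refine ⟨s', hs', hfull, ?_⟩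
  have := congrArg List.length (hτ 0)
  simp only [CondPair.proj, List.length_map, List.length_append, List.length_singleton] at this
  lia

/-- The coordinate `f` of the right sequence is decided by `p`: it takes the same values along all
good extensions of `p`. -/
def Decides (T : List α → List β → Prop) (p : Cond α β) (f : β → Fin 2) : Prop :=
  ∀ q q', p.Extends q → p.Extends q' → FullBelow T q → FullBelow T q' → q.2.length = q'.2.length →
    q.2.map f = q'.2.map f

theorem Decides.mono {p q : Cond α β} {f : β → Fin 2} (h : Decides T p f) (hpq : p.Extends q) :
    Decides T q f := fun q₀ q₁ h₀ h₁ => h q₀ q₁ (hpq.trans h₀) (hpq.trans h₁)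

/-- Some column added by `s'` to `s` has two members agreeing on the coordinate `f`. -/
def AgreesAbove (s s' : CondPair α β) (f : β → Fin 2) : Prop :=
  ∃ x ∈ s'.2.drop s.2.length, f (x 0) = f (x 1)

theorem AgreesAbove.mono {s s' s'' : CondPair α β} {f : β → Fin 2} (h : AgreesAbove s s' f)
    (hs : s'.Extends s'') : AgreesAbove s s'' f :=
  have ⟨x, hx, hf⟩ := h
  ⟨x, (hs.2.drop _).subset hx, hf⟩

theorem forall₂_ne_of_not_agreesAbove {s s' : CondPair α β} {f : β → Fin 2}
    (h : ¬ AgreesAbove s s' f) :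
    List.Forall₂ (· ≠ ·) (((s'.proj 0).2.drop s.2.length).map f)
      (((s'.proj 1).2.drop s.2.length).map f) := by
  simpa [AgreesAbove, CondPair.proj, ← List.map_drop, List.forall₂_map_left_iff,
    List.forall₂_map_right_iff, List.forall₂_same] using h

theorem nontrivial_of_three_le_card (hα : 3 ≤ ENat.card α) : Nontrivial α :=
  (ENat.one_lt_card_iff_nontrivial α).1 (lt_of_lt_of_le (by norm_num) hα)

theorem eq_of_forall₂_ne {l l' m : List (Fin 2)} (h : List.Forall₂ (· ≠ ·) l m)
    (h' : List.Forall₂ (· ≠ ·) l' m) : l = l' := by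
  induction h generalizing l' with
  | nil => exact (List.forall₂_nil_right_iff.1 h').symm
  | cons hxy _ ih =>
    obtain ⟨x', l', hx', hl', rfl⟩ := List.forall₂_cons_right_iff.1 h'
    exact List.cons_eq_cons.2 ⟨by lia, ih hl'⟩

theorem forall₂_ne_zipWith {t : α → α → α} (ht : ∀ x y, x ≠ t x y) {l l' : List α}
    (h : l.length = l'.length) : List.Forall₂ (· ≠ ·) l (List.zipWith t l l') := by
  refine List.forall₂_iff_get.2 ⟨by simp [h], fun i _ _ => ?_⟩
  simpa using ht _ _

/-- A third letter makes room on the `1`-side for a single extension that stays off the diagonal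
from two incompatible extensions on the `0`-side; one of these two must agree with it. -/
theorem exists_agreesAbove_or_decides [Finite β] (hα : 3 ≤ ENat.card α) (hT : IsTree T)
    {s : CondPair α β}
    (hs : ∀ i, FullBelow T (s.proj i)) (f : β → Fin 2) :
    (∃ s', OffDiagExt s s' ∧ (∀ i, FullBelow T (s'.proj i)) ∧ AgreesAbove s s' f) ∨
      Decides T (s.proj 0) f := by
  have := nontrivial_of_three_le_card hα
  choose g hg using fun x : α => exists_ne x
  choose t ht ht' using ENat.exists_ne_ne_of_three_le hα
  refine or_iff_not_imp_left.2 fun hno => ?_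
  rintro ⟨_, τ⟩ ⟨_, τ'⟩ ⟨⟨a, rfl⟩, hτ⟩ ⟨⟨a', rfl⟩, hτ'⟩ hq hq' (hlen : τ.length = τ'.length)
  obtain ⟨a, hq, ha⟩ := hq.exists_append_length_eq (le_max_left _ a'.length)
  obtain ⟨a', hq', ha'⟩ := hq'.exists_append_length_eq (ha ▸ le_max_right _ _)
  let c := List.zipWith t a a'
  have hac : List.Forall₂ (· ≠ ·) a c := forall₂_ne_zipWith (fun x y => (ht x y).symm) ha'.symm
  have hac' : List.Forall₂ (· ≠ ·) a' c := by
    rw [show c = _ from List.zipWith_comm]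
    exact forall₂_ne_zipWith (fun x y => (ht' y x).symm) ha'
  obtain ⟨_, υ, ⟨b, rfl⟩, hυ, h₁, hυlen⟩ :=
    ((hs 1).mono_left (List.prefix_append _ c)).exists_length_eq (n := τ.length) hT
      (by simpa [CondPair.proj] using hτ.length_le)
  have disagree {a τ} (hq : FullBelow T ((s.proj 0).1 ++ a, τ)) (hτ : (s.proj 0).2 <+: τ)
      (hac : List.Forall₂ (· ≠ ·) a c) (hlen : τ.length = υ.length) :
      List.Forall₂ (· ≠ ·) ((τ.drop s.2.length).map f) ((υ.drop s.2.length).map f) := by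
    replace hq := hq.mono_left (List.prefix_append _ (b.map g))
    rw [List.append_assoc] at hq h₁
    obtain ⟨s', hs', hfull, hτυ⟩ := exists_offDiagExt_of_fullBelow (s := s)
      (c := ![a ++ b.map g, c ++ b]) (τ := ![τ, υ]) (Fin.forall_fin_two.2 ⟨hq, h₁⟩)
      (List.rel_append hac (forall₂_ne_map hg b)) hlen (Fin.forall_fin_two.2 ⟨hτ, hυ⟩)
    have := forall₂_ne_of_not_agreesAbove fun h => hno ⟨s', hs', hfull, h⟩
    rwa [hτυ, hτυ] at this
  have hdrop := eq_of_forall₂_ne (disagree hq hτ hac hυlen.symm)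
    (disagree hq' hτ' hac' (hlen ▸ hυlen.symm))
  obtain ⟨w, rfl⟩ := hτ
  obtain ⟨w', rfl⟩ := hτ'
  have hn : s.2.length = (s.proj 0).2.length := by simp [CondPair.proj]
  simpa [hn] using hdrop

theorem exists_agreesAbove [Finite β] (hα : 3 ≤ ENat.card α) (hT : IsTree T)
    {b : Cond α β} {f : β → Fin 2}
    (hb : ∀ p, b.Extends p → FullBelow T p → Decides T p f → Decides T b f) {s : CondPair α β}
    (hs : ∀ i, b.Extends (s.proj i) ∧ FullBelow T (s.proj i)) :
    ∃ s', OffDiagExt s s' ∧ (∀ i, FullBelow T (s'.proj i)) ∧ AgreesAbove s s' f := by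
  have := nontrivial_of_three_le_card hα
  refine (exists_agreesAbove_or_decides hα hT (fun i => (hs i).2) f).elim id fun h => ?_
  obtain ⟨s', hs', hfull, hlt⟩ := exists_offDiagExt_lt_length hT fun i => (hs i).2
  refine ⟨s', hs', hfull, ?_⟩
  by_contra hno
  have heq : (s'.proj 0).2.map f = (s'.proj 1).2.map f :=
    hb _ (hs 0).1 (hs 0).2 h _ _ ((hs 0).1.trans (hs'.1.proj 0)) ((hs 1).1.trans (hs'.1.proj 1))
      (hfull 0) (hfull 1) (by simp [CondPair.proj])
  have hne := forall₂_ne_of_not_agreesAbove hno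
  rw [List.map_drop, List.map_drop, heq, List.forall₂_same] at hne
  have hnil := List.eq_nil_iff_forall_not_mem.2 fun x hx => hne x hx rfl
  simp only [CondPair.proj, List.drop_eq_nil_iff, List.length_map] at hnil
  lia

theorem exists_maximal_decides [Finite ι] (f : ι → β → Fin 2) {p : Cond α β}
    (hp : FullBelow T p) : ∃ b, FullBelow T b ∧
      ∀ q, b.Extends q → FullBelow T q → ∀ i, Decides T q (f i) → Decides T b (f i) := by
  obtain ⟨_, ⟨b, hb, rfl⟩, hmax⟩ := (Set.toFinite
    (Set.image (fun b => {i | Decides T b (f i)}) {b | FullBelow T b})).exists_maximal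
    ⟨_, p, hp, rfl⟩
  exact ⟨b, hb, fun q hbq hq i hi => hmax ⟨q, hq, rfl⟩ (fun j hj => hj.mono hbq) hi⟩

/-- One step of the construction: the pair grows off the diagonal, both members stay good, and
every coordinate of the new columns acquires an agreement. -/
def Step (T : List α → List β → Prop) (f : ι → β → Fin 2) (s s' : CondPair α β) : Prop :=
  OffDiagExt s s' ∧ s.2.length < s'.2.length ∧ (∀ i, AgreesAbove s s' (f i)) ∧
    ∀ i, FullBelow T (s'.proj i)

theorem exists_step [Finite ι] [Finite β] (hα : 3 ≤ ENat.card α) (hT : IsTree T)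
    {f : ι → β → Fin 2} {b : Cond α β}
    (hb : ∀ q, b.Extends q → FullBelow T q → ∀ i, Decides T q (f i) → Decides T b (f i))
    {s : CondPair α β} (hs : ∀ i, b.Extends (s.proj i) ∧ FullBelow T (s.proj i)) :
    ∃ s', Step T f s s' := by
  have := nontrivial_of_three_le_card hα
  obtain ⟨s₀, hs₀, hfull₀, hlt⟩ := exists_offDiagExt_lt_length hT fun i => (hs i).2
  have above {s'} (h : OffDiagExt s s') (i) : b.Extends (s'.proj i) := (hs i).1.trans (h.1.proj i)
  obtain ⟨s', ⟨hs', hfull, hlt'⟩, hagr⟩ := exists_forall_of_dense (r := Cond.Extends)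
    (V := fun s' : CondPair α β => OffDiagExt s s' ∧ (∀ i, FullBelow T (s'.proj i)) ∧
      s.2.length < s'.2.length)
    (Q := fun i s' => AgreesAbove s s' (f i)) (fun _ _ _ _ h hQ => hQ.mono h)
    (fun i s' hV => by
      obtain ⟨s'', hs'', hfull, x, hx, hfx⟩ := exists_agreesAbove hα hT
        (fun p hbp hp => hb p hbp hp i) fun j => ⟨above hV.1 j, hV.2.1 j⟩
      refine ⟨s'', ⟨hV.1.trans hs'', hfull, hV.2.2.trans_le hs''.1.2.length_le⟩, hs''.1, x, ?_, hfx⟩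
      exact (List.drop_sublist_drop_left _ hV.2.2.le).subset hx)
    ⟨hs₀, hfull₀, hlt⟩
  exact ⟨s', hs', hlt', hagr, hfull⟩

end Combinatorics

section Computability

open Encodable

/-- Ordinary codes for partial recursive functions, viewed as oracle codes. -/
def OCode.ofCode : Nat.Partrec.Code → OCode
  | .zero => .zero
  | .succ => .succ
  | .left => .left
  | .right => .right
  | .pair a b => .pair (ofCode a) (ofCode b)
  | .comp a b => .comp (ofCode a) (ofCode b)
  | .prec a b => .prec (ofCode a) (ofCode b)
  | .rfind' a => .rfind' (ofCode a)

theorem oeval_ofCode (O : ℕ → ℕ) (c : Nat.Partrec.Code) : oeval O (.ofCode c) = c.eval := by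
  induction c <;> simp_all only [OCode.ofCode, oeval, Nat.Partrec.Code.eval] <;> rfl

theorem partrec_oeval_zeroO (c : OCode) : Nat.Partrec (oeval zeroO c) := by
  induction c with
  | zero => exact .zero
  | succ => exact .succ
  | left => exact .left
  | right => exact .right
  | oracle => exact .zero
  | pair _ _ ha hb => exact .pair ha hb
  | comp _ _ ha hb => exact .comp ha hb
  | prec _ _ ha hb => exact .prec ha hb
  | rfind' _ ha => exact .rfind' ha

theorem encodeOCode_injective : Function.Injective encodeOCode := by
  intro a
  induction a <;> intro b h <;> cases b <;> simp only [encodeOCode] at h <;>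
    grind [Nat.pair_eq_pair]

theorem exists_oeval_eq {f : ℕ →. ℕ} (hf : Nat.Partrec f) : ∃ c, ∀ O, oeval O c = f :=
  have ⟨c, hc⟩ := Nat.Partrec.Code.exists_code.1 hf
  ⟨.ofCode c, fun O => by rw [oeval_ofCode, hc]⟩

variable {O : ℕ → ℕ}

theorem oeval_comp_of_eq (c : OCode) {d : OCode} {n m : ℕ} (h : oeval O d n = Part.some m) :
    oeval O (.comp c d) n = oeval O c m := by
  change (oeval O d n).bind (fun k => oeval O c k) = _
  rw [h, Part.bind_some]

theorem oeval_prec_zero (c d : OCode) (a : ℕ) :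
    oeval O (.prec c d) (Nat.pair a 0) = oeval O c a := by
  simp [oeval]

theorem oeval_prec_succ_of_eq (c d : OCode) {a n m : ℕ}
    (h : oeval O (.prec c d) (Nat.pair a n) = Part.some m) :
    oeval O (.prec c d) (Nat.pair a (n + 1)) = oeval O d (Nat.pair a (Nat.pair n m)) := by
  rw [oeval, Nat.unpaired, Nat.unpair_pair] at h ⊢
  change Part.bind _ (fun k => oeval O d (Nat.pair a (Nat.pair n k))) = _
  rw [h, Part.bind_some]

namespace RecIn

variable {f g : ℕ → ℕ}

theorem of_computable (hf : Computable f) : RecIn O f :=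
  have ⟨c, hc⟩ := exists_oeval_eq (Partrec.nat_iff.1 hf)
  ⟨c, fun n => by rw [hc]; rfl⟩

theorem computable (hf : RecIn zeroO f) : Computable f := by
  obtain ⟨c, hc⟩ := hf
  exact Partrec.nat_iff.2 ((funext hc : oeval zeroO c = f) ▸ partrec_oeval_zeroO c)

theorem self : RecIn O O := ⟨.oracle, fun _ => rfl⟩

theorem comp (hf : RecIn O f) (hg : RecIn O g) : RecIn O fun n => f (g n) :=
  have ⟨c, hc⟩ := hf
  have ⟨d, hd⟩ := hg
  ⟨.comp c d, fun n => (oeval_comp_of_eq c (hd n)).trans (hc _)⟩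

theorem pair (hf : RecIn O f) (hg : RecIn O g) : RecIn O fun n => Nat.pair (f n) (g n) :=
  have ⟨c, hc⟩ := hf
  have ⟨d, hd⟩ := hg
  ⟨.pair c d, fun n => by simp [oeval, hc, hd, Seq.seq]⟩

theorem prodMk {σ τ : Type*} [Primcodable σ] [Primcodable τ] {s : ℕ → σ} {t : ℕ → τ}
    (hs : RecIn O fun n => encode (s n)) (ht : RecIn O fun n => encode (t n)) :
    RecIn O fun n => encode (s n, t n) := hs.pair ht

theorem map {σ τ : Type*} [Primcodable σ] [Primcodable τ] {s : ℕ → σ} {h : σ → τ}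
    (hs : RecIn O fun n => encode (s n)) (hh : Computable h) :
    RecIn O fun n => encode (h (s n)) := by
  have hF : Computable fun n : ℕ => ((decode (α := σ) n).map fun a => encode (h a)).getD 0 :=
    .option_getD (.option_map .decode (Computable.encode.comp (hh.comp .snd))) (.const 0)
  simpa using (of_computable hF).comp hs

theorem joinF (hf : RecIn O f) (hg : RecIn O g) : RecIn O (joinF f g) := by
  have hhalf : Computable fun n => n / 2 := (Primrec.nat_div.comp .id (.const 2)).to_comp
  have hsel : Computable fun q : ℕ × ℕ × ℕ => if q.1 % 2 = 0 then q.2.1 else q.2.2 :=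
    (Primrec.ite (Primrec.eq.comp (Primrec.nat_mod.comp .fst (.const 2)) (.const 0))
      (.comp .fst .snd) (.comp .snd .snd)).to_comp
  exact map (s := fun n => (n, f (n / 2), g (n / 2))) ((of_computable .id).prodMk
    ((hf.comp (of_computable hhalf)).prodMk (hg.comp (of_computable hhalf)))) hsel

theorem of_succ {c : OCode} (hc : ∀ n, oeval O c (g n) = Part.some (g (n + 1))) : RecIn O g := by
  obtain ⟨c₀, hc₀⟩ := of_computable (O := O) (Computable.const (g 0))
  let d : OCode := .prec c₀ (.comp c (.comp .right .right))
  have hd (n : ℕ) : oeval O d (Nat.pair 0 n) = Part.some (g n) := by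
    induction n with
    | zero => rw [oeval_prec_zero, hc₀]
    | succ n ih =>
      have hright : oeval O (.comp .right .right) (Nat.pair 0 (Nat.pair n (g n))) =
          Part.some (g n) := by
        rw [oeval_comp_of_eq (m := Nat.pair n (g n))] <;> simp [oeval]
      rw [oeval_prec_succ_of_eq _ _ ih, oeval_comp_of_eq c hright, hc]
  obtain ⟨e, he⟩ := (of_computable (O := O) (.const 0)).pair (of_computable .id)
  exact ⟨.comp d e, fun n => (oeval_comp_of_eq d (he n)).trans (hd n)⟩

theorem exists_code_least (hf : RecIn O f) : ∃ c, ∀ n m, f (Nat.pair n m) = 0 →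
    (∀ k < m, f (Nat.pair n k) ≠ 0) → oeval O c n = Part.some m := by
  obtain ⟨c, hc⟩ := hf
  obtain ⟨d, hd⟩ := (of_computable (O := O) .id).pair (of_computable (.const 0))
  refine ⟨.comp (.rfind' c) d, fun n m hm hlt => ?_⟩
  rw [oeval_comp_of_eq _ (hd n), oeval, Nat.unpaired, Nat.unpair_pair, Part.eq_some_iff]
  refine Part.mem_map (· + 0) (Nat.mem_rfind.2 ⟨?_, fun {k} hk => ?_⟩)
  · simp [hc, hm]
  · simp [hc, hlt k hk]

end RecIn

section RePred

variable {α σ γ : Type*} [Primcodable α] [Primcodable σ] [Primcodable γ]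

theorem rePred_exists {D : α × γ → Prop} (hD : ComputablePred D) :
    REPred fun a => ∃ c, D (a, c) := by
  obtain ⟨_, hD⟩ := hD
  have hp : Computable₂ fun (a : α) (n : ℕ) =>
      ((decode n).map fun c : γ => decide (D (a, c))).getD false :=
    .option_getD (.option_map (Computable.decode.comp .snd)
      (hD.comp ((Computable.fst.comp .fst).pair .snd))) (.const _)
  refine (Partrec.rfind hp.partrec₂).dom_re.of_eq fun a => ?_
  simp only [Nat.rfind_dom, PFun.coe_val, Part.mem_some_iff, Part.some_dom, implies_true, and_true]
  constructor
  · rintro ⟨n, hn⟩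
    cases h : decode (α := γ) n with
    | none => simp [h] at hn
    | some c => exact ⟨c, by simpa [h] using hn⟩
  · rintro ⟨c, hc⟩
    exact ⟨encode c, by simpa using hc⟩

theorem RecIn.chi_of_rePred {A : Set ℕ} (hA : REPred (· ∈ A)) :
    RecIn (chi emptyJump) (chi A) := by
  obtain ⟨c, hc⟩ := exists_oeval_eq
    (Partrec.nat_iff.1 (Partrec.map hA (Computable.const 0).to₂))
  have hmem (n : ℕ) : Nat.pair (encodeOCode c) n ∈ emptyJump ↔ n ∈ A := by
    simp [emptyJump, jump, encodeOCode_injective.eq_iff, hc, Part.assert]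
  refine cast (congrArg (RecIn _) (funext fun n => ?_))
    (RecIn.self.comp (of_computable (f := Nat.pair (encodeOCode c))
      (Primrec₂.natPair.comp (.const _) .id).to_comp))
  classical simp only [chi, Set.indicator_apply, hmem]

theorem RecIn.exists_seq {R : σ → σ → Prop} (hR : REPred fun p : σ × σ => ¬ R p.1 p.2)
    {V : σ → Prop} (hex : ∀ s, V s → ∃ s', R s s') (hV : ∀ s s', V s → R s s' → V s') {s₀ : σ}
    (hs₀ : V s₀) :
    ∃ g : ℕ → σ, RecIn (chi emptyJump) (fun n => encode (g n)) ∧ ∀ n, R (g n) (g (n + 1)) := by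
  let A : Set ℕ := {w | ∀ p ∈ decode₂ (σ × σ) w, ¬ R p.1 p.2}
  have hA : REPred (· ∈ A) := by
    have := Partrec.optionCasesOn_right (Primrec.decode₂ (α := σ × σ)).to_comp (.const ())
      (hR.comp .snd).to₂
    refine this.dom_re.of_eq fun w => ?_
    cases h : decode₂ (σ × σ) w <;> simp [A, h, Part.assert, -Prod.forall]
  have hmem (s : σ) (k : ℕ) : chi A (Nat.pair (encode s) k) = 0 ↔ ∃ s', encode s' = k ∧ R s s' := by
    simp [chi, A, decode₂_eq_some]
  have hleast (s) (hs : V s) : ∃ s', R s s' ∧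
      ∀ k < encode s', chi A (Nat.pair (encode s) k) ≠ 0 := by
    obtain ⟨s', hs', hmin⟩ := exists_minimalFor_of_wellFoundedLT (R s) encode (hex s hs)
    refine ⟨s', hs', fun k hk h => ?_⟩
    obtain ⟨s'', rfl, hs''⟩ := (hmem s k).1 h
    exact hk.not_ge (hmin hs'' hk.le)
  obtain ⟨c, hc⟩ := (RecIn.chi_of_rePred hA).exists_code_least
  choose! next hnext hmin using hleast
  let g : ℕ → σ := fun n => next^[n] s₀
  have hg (n) : g (n + 1) = next (g n) := Function.iterate_succ_apply' ..
  have hVg (n) : V (g n) := by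
    induction n with
    | zero => exact hs₀
    | succ n ih => exact hg n ▸ hV _ _ ih (hnext _ ih)
  refine ⟨g, .of_succ (c := c) fun n => ?_, fun n => hg n ▸ hnext _ (hVg n)⟩
  rw [hg]
  exact hc _ _ ((hmem _ _).2 ⟨_, rfl, hnext _ (hVg n)⟩) (hmin _ (hVg n))

end RePred

end Computability

section Arithmetic

variable {α β γ ι : Type*} [Primcodable α] [Primcodable β] [Primcodable γ]

theorem rePred_or {p q : α → Prop} (hp : REPred p) (hq : REPred q) :
    REPred fun a => p a ∨ q a := by
  obtain ⟨k, hk, hdom⟩ := Partrec.merge' hp hq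
  exact hk.dom_re.of_eq fun a => by simp [(hdom a).2, Part.assert]

theorem computablePred_comp {p : γ → Prop} (hp : ComputablePred p) {g : α → γ}
    (hg : Computable g) : ComputablePred fun a => p (g a) :=
  have ⟨_, hp⟩ := hp
  ⟨fun _ => inferInstance, hp.comp hg⟩

theorem computablePred_and {p q : α → Prop} (hp : ComputablePred p) (hq : ComputablePred q) :
    ComputablePred fun a => p a ∧ q a := by
  obtain ⟨_, hp⟩ := hp
  obtain ⟨_, hq⟩ := hq
  exact ⟨inferInstance, (Primrec.and.to_comp.comp hp hq).of_eq fun a => by simp⟩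

theorem computablePred_exists_mem {D : α × γ → Prop} (hD : ComputablePred D) {l : α → List γ}
    (hl : Computable l) : ComputablePred fun a => ∃ c ∈ l a, D (a, c) := by
  obtain ⟨_, hD⟩ := hD
  have hstep : Computable₂ fun (a : α) (q : ℕ × Bool) =>
      q.2 || (((l a)[q.1]?).map fun c => decide (D (a, c))).getD false :=
    Primrec.or.to_comp.comp (Computable.snd.comp .snd) <| .option_getD
      (.option_map (Computable.list_getElem?.comp (hl.comp .fst) (Computable.fst.comp .snd))
        (hD.comp ((Computable.fst.comp .fst).pair .snd))) (.const _)
  have hrec := Computable.nat_rec (Computable.list_length.comp hl) (.const false) hstep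
  refine ⟨Classical.decPred _, hrec.of_eq fun a => ?_⟩
  suffices ∀ n, Nat.rec false (fun n b => b ||
      (((l a)[n]?).map fun c => decide (D (a, c))).getD false) n =
      decide (∃ c ∈ (l a).take n, D (a, c)) by simp [this]
  intro n
  induction n with
  | zero => simp
  | succ n ih => cases h : (l a)[n]? <;> simp [ih, List.take_add_one, h, or_and_right, exists_or]

theorem exists_primrec_mem_iff_length_eq [Finite β] :
    ∃ l : ℕ → List (List β), Primrec l ∧ ∀ n τ, τ ∈ l n ↔ τ.length = n := by
  have := Fintype.ofFinite β
  have hstep : Primrec₂ fun (_ : ℕ) (L : List (List β)) =>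
      L.flatMap fun τ => (Finset.univ : Finset β).toList.map fun v => v :: τ :=
    .list_flatMap .snd (.list_map (.const _) (Primrec.list_cons.comp .snd (.comp .snd .fst)))
  refine ⟨_, Primrec.nat_rec₁ [[]] hstep, fun n => ?_⟩
  induction n with
  | zero => simp
  | succ n ih =>
    rintro (_ | ⟨v, τ⟩) <;> simp [ih]

theorem primrecRel_prefix : PrimrecRel fun l l' : List α => l <+: l' :=
  (Primrec.eq.comp .fst (Primrec.list_take.comp (Primrec.list_length.comp .fst) .snd)).of_eq
    fun _ => List.prefix_iff_eq_take.symm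

variable {T : List α → List β → Prop}

theorem rePred_not_fullBelow [Finite β] (hT : ComputablePred fun p : Cond α β => T p.1 p.2) :
    REPred fun p : Cond α β => ¬ FullBelow T p := by
  obtain ⟨l, hl, hmem⟩ := exists_primrec_mem_iff_length_eq (β := β)
  have hρ : Primrec fun q : Cond α β × List α => q.1.1 ++ q.2 :=
    Primrec.list_append.comp (.comp .fst .fst) .snd
  have hD : ComputablePred fun q : (Cond α β × List α) × List β =>
      q.1.1.2 <+: q.2 ∧ T (q.1.1.1 ++ q.1.2) q.2 :=
    computablePred_and
      (primrecRel_prefix.comp (.comp .snd (.comp .fst .fst)) .snd).computablePred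
      (computablePred_comp hT ((hρ.comp .fst).pair .snd).to_comp)
  have hlen := (hl.comp (Primrec.list_length.comp hρ)).to_comp
  refine (rePred_exists (computablePred_exists_mem hD hlen).not).of_eq fun p => ?_
  rw [← not_forall, not_iff_not]
  constructor
  · rintro h _ ⟨ρ, rfl⟩
    obtain ⟨τ, hτ, hp, hmemT⟩ := h ρ
    exact ⟨τ, hp, (hmem _ _).1 hτ, hmemT⟩
  · intro h ρ
    obtain ⟨τ, hp, hτ, hmemT⟩ := h _ (List.prefix_append _ ρ)
    exact ⟨τ, (hmem _ _).2 hτ, hp, hmemT⟩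

theorem primrec_eval {n : ℕ} (i : Fin n) : Primrec fun x : Fin n → α => x i :=
  Primrec.fin_app.comp .id (.const i)

theorem primrec_proj (i : Fin 2) : Primrec (CondPair.proj i : CondPair α β → Cond α β) :=
  .pair (.list_map .fst ((primrec_eval i).comp .snd).to₂)
    (.list_map .snd ((primrec_eval i).comp .snd).to₂)

theorem primrecRel_extends : PrimrecRel (Cond.Extends : Cond α β → Cond α β → Prop) :=
  (primrecRel_prefix.comp (.comp .fst .fst) (.comp .fst .snd)).and
    (primrecRel_prefix.comp (.comp .snd .fst) (.comp .snd .snd))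

theorem primrecRel_offDiagExt : PrimrecRel (OffDiagExt : CondPair α β → CondPair α β → Prop) :=
  have hne : PrimrecPred fun x : Fin 2 → α => x 0 ≠ x 1 :=
    .not (Primrec.eq.comp (primrec_eval 0) (primrec_eval 1))
  .and primrecRel_extends <| hne.forall_mem_list.comp <|
    Primrec.list_drop.comp (Primrec.list_length.comp (.comp .fst .fst)) (.comp .fst .snd)

variable [Finite β] [Finite ι] [Primcodable ι]

theorem primrecRel_agreesAbove (f : ι → β → Fin 2) :
    PrimrecRel fun (p : CondPair α β × CondPair α β) i => AgreesAbove p.1 p.2 (f i) :=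
  have hf : PrimrecRel fun (x : Fin 2 → β) i => f i (x 0) = f i (x 1) :=
    Primrec.eq.comp (Primrec.dom_finite _) (Primrec.dom_finite _)
  hf.exists_mem_list.comp (Primrec.list_drop.comp
    (Primrec.list_length.comp (.comp .snd (.comp .fst .fst))) (.comp .snd (.comp .snd .fst))) .snd

theorem rePred_not_step (hT : ComputablePred fun p : Cond α β => T p.1 p.2)
    (f : ι → β → Fin 2) :
    REPred fun p : CondPair α β × CondPair α β => ¬ Step T f p.1 p.2 := by
  have hfull (i : Fin 2) : REPred fun p : CondPair α β × CondPair α β =>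
      ¬ FullBelow T (p.2.proj i) :=
    (rePred_not_fullBelow hT).comp ((primrec_proj i).comp .snd).to_comp
  have hlt : PrimrecRel fun s s' : CondPair α β => s.2.length < s'.2.length :=
    Primrec.nat_lt.comp (Primrec.list_length.comp (.comp .snd .fst))
      (Primrec.list_length.comp (.comp .snd .snd))
  refine (rePred_or (primrecRel_offDiagExt.and hlt).not.computablePred.to_re
    (rePred_or (rePred_exists (primrecRel_agreesAbove f).not.computablePred)
      (rePred_or (hfull 0) (hfull 1)))).of_eq fun p => ?_
  simp only [Step, Fin.forall_fin_two, not_and_or, not_forall, or_assoc]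

end Arithmetic

section Limit

theorem map_seg {γ δ : Type} (f : γ → δ) (X : ℕ → γ) (n : ℕ) :
    (seg X n).map f = seg (fun m => f (X m)) n := by
  simp [seg, Function.comp_def]

variable {γ : Type} [Inhabited γ] {l : ℕ → List γ}

/-- The limit of a sequence of strings, each a prefix of the next, whose `n`-th member has length
at least `n`. -/
def limit (l : ℕ → List γ) (n : ℕ) : γ := (l (n + 1)).getI n

theorem getElem_eq_limit (hl : ∀ n, l n <+: l (n + 1)) (hlen : ∀ n, n ≤ (l n).length) {n m : ℕ}
    (hm : m < (l n).length) : (l n)[m] = limit l m := by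
  have hmono {a b : ℕ} (h : a ≤ b) : l a <+: l b :=
    Nat.rel_of_forall_rel_succ_of_le (· <+: ·) hl h
  rw [limit, List.getI_eq_getElem _ (hlen (m + 1))]
  obtain h | h := le_total n (m + 1)
  · exact (hmono h).getElem hm
  · exact ((hmono h).getElem (hlen (m + 1))).symm

theorem take_eq_seg_limit (hl : ∀ n, l n <+: l (n + 1)) (hlen : ∀ n, n ≤ (l n).length) {n m : ℕ}
    (hm : m ≤ (l n).length) : (l n).take m = seg (limit l) m :=
  List.ext_getElem (by simp [seg, hm]) fun k _ _ => by
    simp [seg, getElem_eq_limit hl hlen]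

end Limit

section CrossTree

variable {r : ℕ} {T : CrossTree r}

/-- Membership in a cross-tree, with the right component given by its list of columns. -/
def CrossTree.Node (T : CrossTree r) (ρ : List (Fin 3)) (τ : List (Fin r → Fin 2)) : Prop :=
  (ρ, fun k => τ.map (· k)) ∈ T.mem

theorem CrossTree.isTree_node : IsTree T.Node := fun ρ τ h n => by
  refine T.closed _ h _ (List.take_prefix ..) (fun k => (List.take_prefix n τ).map _) (by simp)
    fun k => ?_
  have := T.len_le _ h k
  simp only [List.length_map, List.length_take] at this ⊢
  lia

theorem encNode_injective : Function.Injective (encNode : Str3 × StrTup r → ℕ) := fun p q h => by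
  simpa [encNode, Nat.pair_eq_pair, List.ofFn_inj, ← Prod.ext_iff] using h

theorem CrossTree.computablePred_node (hT : TreeComputable T) :
    ComputablePred fun p : Cond (Fin 3) (Fin r → Fin 2) => T.Node p.1 p.2 := by
  have henc : Primrec fun p : Cond (Fin 3) (Fin r → Fin 2) =>
      encNode (p.1, fun k => p.2.map (· k)) :=
    Primrec₂.natPair.comp (Primrec.encode.comp .fst) <| Primrec.encode.comp <|
      .list_ofFn fun k => .list_map .snd ((primrec_eval k).comp .snd).to₂
  refine (computablePred_comp (Primrec.eq.comp .id (.const 1)).computablePred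
    (hT.computable.comp henc.to_comp)).of_eq fun p => ?_
  simp [chi, Set.indicator, encNode_injective.eq_iff, CrossTree.Node]

theorem LeftFull.fullBelow (h : LeftFull T) : FullBelow T.Node ([], []) := fun ρ _ => by
  obtain ⟨Y, -, hY⟩ := h (fun n => ρ.getD n 0) (fun i => i.elim0)
  refine ⟨List.ofFn fun (n : Fin ρ.length) k => Y k n, List.nil_prefix, by simp, ?_⟩
  simpa [seg, CrossTree.Node, Function.comp_def] using hY ρ.length

variable {g : ℕ → CondPair (Fin 3) (Fin r → Fin 2)}

theorem le_length_snd_of_step (hg : ∀ n, Step T.Node (fun k x => x k) (g n) (g (n + 1))) (n : ℕ) :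
    n ≤ (g n).2.length := by
  induction n with
  | zero => exact Nat.zero_le _
  | succ n ih => exact ih.trans_lt (hg n).2.1

theorem le_length_fst_of_step (hg : ∀ n, Step T.Node (fun k x => x k) (g n) (g (n + 1))) (n : ℕ) :
    n ≤ (g n).1.length := by
  cases n with
  | zero => exact Nat.zero_le _
  | succ n =>
    have := ((hg n).2.2.2 0).length_le
    exact (le_length_snd_of_step hg (n + 1)).trans (by simpa using this)

theorem limit_fst_ne_of_step (hg : ∀ n, Step T.Node (fun k x => x k) (g n) (g (n + 1))) {n : ℕ}
    (hn : (g 0).1.length ≤ n) :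
    limit (fun n => (g n).1) n 0 ≠ limit (fun n => (g n).1) n 1 := by
  have : Std.Refl (OffDiagExt (α := Fin 3) (β := Fin r → Fin 2)) := ⟨.refl⟩
  have : IsTrans _ (OffDiagExt (α := Fin 3) (β := Fin r → Fin 2)) := ⟨fun _ _ _ => .trans⟩
  have hoff : OffDiagExt (g 0) (g (n + 1)) :=
    Nat.rel_of_forall_rel_succ_of_le OffDiagExt (fun n => (hg n).1) (Nat.zero_le _)
  have hlen := le_length_fst_of_step hg
  rw [← getElem_eq_limit (fun n => (hg n).1.1.1) hlen (hlen (n + 1))]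
  exact hoff.2 _ (List.mem_drop_iff_getElem.2 ⟨n - (g 0).1.length, by grind, by grind⟩)

theorem exists_gt_limit_snd_eq_of_step
    (hg : ∀ n, Step T.Node (fun k x => x k) (g n) (g (n + 1))) (k : Fin r) (n : ℕ) :
    ∃ m > n, limit (fun n => (g n).2) m 0 k = limit (fun n => (g n).2) m 1 k := by
  obtain ⟨x, hx, hxk⟩ := (hg (n + 1)).2.2.1 k
  obtain ⟨m, hm, rfl⟩ := List.mem_drop_iff_getElem.1 hx
  have hlen := le_length_snd_of_step hg
  rw [getElem_eq_limit (fun n => (hg n).1.1.2) hlen] at hxk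
  exact ⟨_, (hlen (n + 1)).trans (Nat.le_add_right ..), hxk⟩

theorem CCSolution.of_step (hg : ∀ n, Step T.Node (fun k x => x k) (g n) (g (n + 1))) :
    CCSolution T (fun i n => limit (fun n => (g n).1) n i)
      (fun i k n => limit (fun n => (g n).2) n i k) := by
  refine ⟨fun i n => ?_, fun j => ?_, fun k => ?_⟩
  · have hX := le_length_fst_of_step hg
    have hY := le_length_snd_of_step hg
    have hXn := n.le_succ.trans (hX (n + 1))
    have hYn := n.le_succ.trans (hY (n + 1))
    have := ((hg n).2.2.2 i).mem_take CrossTree.isTree_node (n := n) (by simpa using hYn)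
    simpa [CrossTree.Node, ← List.map_take, take_eq_seg_limit (fun n => (hg n).1.1.1) hX hXn,
      take_eq_seg_limit (fun n => (hg n).1.1.2) hY hYn, map_seg, Function.comp_def] using this
  · refine (Set.finite_Iio (g 0).1.length).subset fun n hn => ?_
    by_contra hle
    exact limit_fst_ne_of_step hg (not_lt.1 hle) (hn.1.trans hn.2.symm)
  · by_contra! hfin
    have hinf := Set.infinite_of_forall_exists_gt fun n =>
      (exists_gt_limit_snd_eq_of_step hg k n).imp fun m hm => ⟨hm.2, hm.1⟩
    refine hinf ((Set.finite_iUnion hfin).subset fun m hm => ?_)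
    exact Set.mem_iUnion.2 ⟨_, rfl, Eq.symm hm⟩

end CrossTree

section Solution

open Encodable

variable {O : ℕ → ℕ}

theorem RecIn.limit {γ : Type} [Primcodable γ] [Inhabited γ] {l : ℕ → List γ}
    (hl : RecIn O fun n => encode (l n)) : RecIn O fun n => encode (limit l n) :=
  .map (s := fun n => (l (n + 1), n)) (h := fun q => q.1.getI q.2)
    ((hl.comp (.of_computable .succ)).prodMk (.of_computable .id)) Primrec.list_getI.to_comp

theorem RecIn.solOracle {σ : Type*} [Primcodable σ] {s : ℕ → σ} {r : ℕ} {x : σ → Fin 3}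
    {y : σ → Fin r → Fin 2} (hs : RecIn O fun n => encode (s n)) (hx : Computable x)
    (hy : Computable y) : RecIn O (solOracle (fun n => x (s n)) fun k n => y (s n) k) := by
  let letters (p : Fin 3 × (Fin r → Fin 2)) : List ℕ := p.1 :: List.ofFn fun k => p.2 k
  have hletters : Computable fun a => letters (x a, y a) :=
    (Primrec.dom_finite letters).to_comp.comp (hx.pair hy)
  have hsel : Computable fun q : ℕ × σ => (letters (x q.2, y q.2)).getD q.1.unpair.1 0 :=
    (Primrec.list_getD 0).to_comp.comp (hletters.comp .snd) (.comp .fst (.comp .unpair .fst))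
  refine cast (congrArg (RecIn O) (funext fun n => ?_)) <|
    ((of_computable .id).prodMk (hs.comp (of_computable (.comp .snd .unpair)))).map hsel
  simp only [encode_nat, letters, Paper.solOracle]
  cases n.unpair.1 with
  | zero => rfl
  | succ k => simp [List.getD, List.getElem?_ofFn, apply_dite (Option.getD · 0)]

end Solution

/-- Cross-constraint Δ⁰₂ basis theorem: every left-full computable instance of the
cross-constraint problem has a solution whose join is computable in `∅′`. -/
theorem cc_delta2_basis (r : ℕ) (T : CrossTree r)
    (hcomp : TreeComputable T) (hfull : LeftFull T) :
    ∃ (X : Fin 2 → ℕ → Fin 3) (Y : Fin 2 → Fin r → ℕ → Fin 2),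
      CCSolution T X Y ∧
      RecIn (chi emptyJump) (joinF (solOracle (X 0) (Y 0)) (solOracle (X 1) (Y 1))) := by
  let f : Fin r → (Fin r → Fin 2) → Fin 2 := fun k x => x k
  obtain ⟨b, hb, hmax⟩ := exists_maximal_decides f hfull.fullBelow
  let Good (s : CondPair (Fin 3) (Fin r → Fin 2)) : Prop :=
    ∀ i, b.Extends (s.proj i) ∧ FullBelow T.Node (s.proj i)
  obtain ⟨g, hrec, hg⟩ := RecIn.exists_seq (rePred_not_step (CrossTree.computablePred_node hcomp) f)
    (V := Good) (s₀ := (b.1.map fun x _ => x, b.2.map fun y _ => y))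
    (fun s hs => exists_step (by simp) CrossTree.isTree_node hmax hs)
    (fun s s' hs hstep i => ⟨(hs i).1.trans (hstep.1.1.proj i), hstep.2.2.2 i⟩)
    (fun i => by simpa [CondPair.proj, Function.comp_def] using ⟨.refl b, hb⟩)
  have hsol (i : Fin 2) : RecIn (chi emptyJump) (solOracle (fun n => limit (fun n => (g n).1) n i)
      fun k n => limit (fun n => (g n).2) n i k) := by
    have hlim := (hrec.map .fst).limit.prodMk (hrec.map .snd).limit
    exact hlim.solOracle ((primrec_eval i).comp .fst).to_comp ((primrec_eval i).comp .snd).to_comp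
  exact ⟨_, _, .of_step hg, (hsol 0).joinF (hsol 1)⟩

end Paper
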